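/- Let m = 1 and let φ(z) = 2·z³ + 2·z³·conj(z) + conj(z)³ + 3·z·conj(z)³. Then ⟨T_φ(T_φ (w ↦ w)), T_φ (w ↦ w)⟩ = 0, ⟨T_{conj∘φ}(T_φ (w ↦ w)), T_{conj∘φ} (w ↦ w)⟩ = 0, and ‖T_φ (w ↦ w)‖² − ‖T_{conj∘φ} (w ↦ w)‖² = −2640·π; in particular the quasinormality test ⟨T_φ(T_φ (w ↦ w)), T_φ (w ↦ w)⟩ = ⟨T_{conj∘φ}(T_φ (w ↦ w)), T_{conj∘φ} (w ↦ w)⟩ holds at the monomial z while the hyponormality test ‖T_φ (w ↦ w)‖² ≥ ‖T_{conj∘φ} (w ↦ w)‖² fails. -/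

import Mathlib

/-!
The weight `|z|^{2m} e^{-|z|²}` is rotation invariant, so `⟨w ^ a * conj w ^ b, 1⟩` vanishes unless
`a = b`, when it is `π (a + m)!`. Integrating the kernel expansion term by term identifies the
`j`-th Taylor coefficient of `T_ψ f` as `⟨ψ f, w ^ j⟩ / (π (j + m)!)`. Hence `T_ψ f` is the image of
`ψ f` under the linear projection that sends `w ^ a * conj w ^ b` to
`(a + m)! / (a - b + m)! * z ^ (a - b)`, or to `0` when `a < b`.

This gives `T_φ z = 2 (m + 4) z³ + 2 z⁴` and `T_{conj φ} z = 3 (m + 4) z³ + z⁴`, whose square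
norms differ by `-π (5 m + 17) (m + 4)!`. Every term of `φ` and of `conj φ` shifts degrees by `±2`
or `±3`, so a second application produces neither `z³` nor `z⁴`; this is why both pairings vanish.
-/

open MeasureTheory Complex ComplexOrder

/-- Weight function: `|z|^{2m} e^{-|z|^2}` as a complex number. -/
noncomputable def fsWt (m : ℕ) (z : ℂ) : ℂ :=
  ((‖z‖ : ℝ) : ℂ) ^ (2 * m) * ((Real.exp (-‖z‖ ^ 2) : ℝ) : ℂ)

/-- Fock–Sobolev reproducing kernel `K_m(z,w)`. -/
noncomputable def fsKernel (m : ℕ) (z w : ℂ) : ℂ :=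
  ∑' j : ℕ, ((m.factorial : ℂ) / ((j + m).factorial : ℂ)) * (z * starRingEnd ℂ w) ^ j

/-- Toeplitz operator with symbol `ψ` acting on `f`, evaluated at `z`. -/
noncomputable def fsToeplitz (m : ℕ) (ψ f : ℂ → ℂ) (z : ℂ) : ℂ :=
  (1 / ((Real.pi : ℂ) * (m.factorial : ℂ))) *
    ∫ w : ℂ, ψ w * f w * fsKernel m z w * fsWt m w

/-- Fock–Sobolev pairing `⟨g, h⟩`. -/
noncomputable def fsPair (m : ℕ) (g h : ℂ → ℂ) : ℂ :=
  ∫ z : ℂ, g z * starRingEnd ℂ (h z) * fsWt m z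

/-- `‖g‖² = ⟨g, g⟩`. -/
noncomputable def fsNormSq (m : ℕ) (g : ℂ → ℂ) : ℂ := fsPair m g g

section GaussianIntegrals

lemma integral_norm_pow_mul_exp_neg_mul_sq (n : ℕ) {b : ℝ} (hb : 0 < b) :
    ∫ w : ℂ, ‖w‖ ^ n * Real.exp (-b * ‖w‖ ^ 2) =
      Real.pi * b ^ (-((n : ℝ) + 2) / 2) * Real.Gamma (((n : ℝ) + 2) / 2) := by
  have hn : (-2 : ℝ) < n := by linarith [n.cast_nonneg (α := ℝ)]
  simpa [Real.rpow_natCast] using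
    Complex.integral_rpow_mul_exp_neg_mul_rpow one_le_two hn hb

lemma integral_norm_pow_two_mul_mul_exp_neg_sq (n : ℕ) :
    ∫ w : ℂ, ‖w‖ ^ (2 * n) * Real.exp (-‖w‖ ^ 2) = Real.pi * n.factorial := by
  have h := integral_norm_pow_mul_exp_neg_mul_sq (2 * n) one_pos
  have harg : (((2 * n : ℕ) : ℝ) + 2) / 2 = n + 1 := by push_cast; ring
  simp only [neg_one_mul] at h
  rwa [harg, Real.Gamma_nat_eq_factorial, Real.one_rpow, mul_one] at h

lemma integrable_norm_pow_mul_exp_neg_mul_sq (n : ℕ) {b : ℝ} (hb : 0 < b) :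
    Integrable fun w : ℂ => ‖w‖ ^ n * Real.exp (-b * ‖w‖ ^ 2) := by
  -- a non-integrable function has Bochner integral zero, but this integral is positive
  refine not_imp_comm.1 integral_undef ?_
  rw [integral_norm_pow_mul_exp_neg_mul_sq n hb]
  have : 0 < Real.Gamma (((n : ℝ) + 2) / 2) := Real.Gamma_pos_of_pos (by positivity)
  positivity

lemma integrable_norm_pow_mul_exp_mul_exp_neg_sq (n : ℕ) (t : ℝ) :
    Integrable fun w : ℂ => ‖w‖ ^ n * Real.exp (t * ‖w‖) * Real.exp (-‖w‖ ^ 2) := by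
  refine ((integrable_norm_pow_mul_exp_neg_mul_sq n one_half_pos).const_mul
    (Real.exp (t ^ 2 / 2))).mono' (by fun_prop) (.of_forall fun w => ?_)
  have hexp : Real.exp (t * ‖w‖) * Real.exp (-‖w‖ ^ 2) ≤
      Real.exp (t ^ 2 / 2) * Real.exp (-(1 / 2) * ‖w‖ ^ 2) := by
    rw [← Real.exp_add, ← Real.exp_add]
    exact Real.exp_le_exp.2 (by linarith [two_mul_le_add_sq t ‖w‖])
  rw [Real.norm_of_nonneg (by positivity), mul_assoc, mul_left_comm (Real.exp (t ^ 2 / 2))]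
  gcongr

end GaussianIntegrals

lemma continuous_fsWt (m : ℕ) : Continuous (fsWt m) := by
  unfold fsWt
  fun_prop

lemma norm_fsWt (m : ℕ) (w : ℂ) : ‖fsWt m w‖ = ‖w‖ ^ (2 * m) * Real.exp (-‖w‖ ^ 2) := by
  simp only [fsWt, norm_mul, norm_pow, norm_real, Real.norm_eq_abs, abs_norm, Real.abs_exp]

section Kernel

lemma factorial_div_factorial_add_le (m j : ℕ) :
    (m.factorial : ℝ) / (j + m).factorial ≤ 1 / j.factorial := by
  rw [div_le_div_iff₀ (by positivity) (by positivity), one_mul, mul_comm]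
  exact_mod_cast Nat.le_of_dvd (j + m).factorial_pos
    (Nat.factorial_mul_factorial_dvd_factorial_add j m)

lemma norm_fsKernel_term_le (m : ℕ) (z w : ℂ) (j : ℕ) :
    ‖(m.factorial : ℂ) / (j + m).factorial * (z * starRingEnd ℂ w) ^ j‖ ≤
      (‖z‖ * ‖w‖) ^ j / j.factorial := by
  simp only [norm_mul, norm_div, norm_pow, RCLike.norm_natCast, RCLike.norm_conj]
  rw [← one_div_mul_eq_div _ ((‖z‖ * ‖w‖) ^ j)]
  exact mul_le_mul_of_nonneg_right (factorial_div_factorial_add_le m j) (by positivity)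

lemma hasSum_pow_div_factorial_exp (x : ℝ) :
    HasSum (fun j : ℕ => x ^ j / j.factorial) (Real.exp x) := by
  rw [Real.exp_eq_exp_ℝ]
  exact NormedSpace.expSeries_div_hasSum_exp x

lemma hasSum_fsKernel (m : ℕ) (z w : ℂ) :
    HasSum (fun j : ℕ => (m.factorial : ℂ) / (j + m).factorial * (z * starRingEnd ℂ w) ^ j)
      (fsKernel m z w) :=
  (Summable.of_norm_bounded (hasSum_pow_div_factorial_exp (‖z‖ * ‖w‖)).summable
    (norm_fsKernel_term_le m z w)).hasSum

lemma hasSum_integral_mul_fsKernel (m : ℕ) {G : ℂ → ℂ} {z : ℂ}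
    (hG : Integrable fun w => G w * Real.exp (‖z‖ * ‖w‖)) :
    HasSum (fun j : ℕ =>
        ∫ w, G w * ((m.factorial : ℂ) / (j + m).factorial * (z * starRingEnd ℂ w) ^ j))
      (∫ w, G w * fsKernel m z w) := by
  have hbound (w : ℂ) : HasSum (fun j : ℕ => ‖G w‖ * ((‖z‖ * ‖w‖) ^ j / j.factorial))
      (‖G w‖ * Real.exp (‖z‖ * ‖w‖)) := (hasSum_pow_div_factorial_exp _).mul_left _
  have hG_meas : AEStronglyMeasurable G := by
    have hexp : Continuous fun w : ℂ => (Real.exp (-(‖z‖ * ‖w‖)) : ℂ) := by fun_prop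
    refine (hG.aestronglyMeasurable.mul hexp.aestronglyMeasurable).congr (.of_forall fun w => ?_)
    simp only [Pi.mul_apply, mul_assoc, ← ofReal_mul, ← Real.exp_add, add_neg_cancel,
      Real.exp_zero, ofReal_one, mul_one]
  refine hasSum_integral_of_dominated_convergence _
    (fun j => hG_meas.mul (Continuous.aestronglyMeasurable (by fun_prop)))
    (fun j => .of_forall fun w => ?_) (.of_forall fun w => (hbound w).summable) ?_
    (.of_forall fun w => (hasSum_fsKernel m z w).mul_left _)
  · rw [norm_mul]
    gcongr
    exact norm_fsKernel_term_le m z w j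
  · refine hG.norm.congr (.of_forall fun w => ?_)
    simp only
    rw [(hbound w).tsum_eq, norm_mul, norm_real, Real.norm_eq_abs, Real.abs_exp]

theorem hasSum_fsToeplitz {m : ℕ} {ψ f : ℂ → ℂ} {z : ℂ}
    (hψf : Integrable fun w => ψ w * f w * fsWt m w * Real.exp (‖z‖ * ‖w‖)) :
    HasSum
      (fun j : ℕ =>
        fsPair m (fun w => ψ w * f w) (· ^ j) / (Real.pi * (j + m).factorial) * z ^ j)
      (fsToeplitz m ψ f z) := by
  have hm : (m.factorial : ℂ) ≠ 0 := Nat.cast_ne_zero.2 m.factorial_ne_zero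
  have hcoeff (j : ℕ) : fsPair m (fun w => ψ w * f w) (· ^ j) / (Real.pi * (j + m).factorial) *
      z ^ j = 1 / ((Real.pi : ℂ) * m.factorial) * ∫ w, ψ w * f w * fsWt m w *
        ((m.factorial : ℂ) / (j + m).factorial * (z * starRingEnd ℂ w) ^ j) := by
    have hint : ∫ w, ψ w * f w * fsWt m w *
        ((m.factorial : ℂ) / (j + m).factorial * (z * starRingEnd ℂ w) ^ j) =
        m.factorial / (j + m).factorial * z ^ j * fsPair m (fun w => ψ w * f w) (· ^ j) := by
      rw [fsPair, ← integral_const_mul]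
      congr 1 with w
      simp only [mul_pow, map_pow]
      ring
    rw [hint]
    field_simp
  have hkernel : fsToeplitz m ψ f z = 1 / ((Real.pi : ℂ) * m.factorial) *
      ∫ w, ψ w * f w * fsWt m w * fsKernel m z w := by
    simp only [fsToeplitz, mul_right_comm _ (fsWt m _)]
  simp_rw [hcoeff, hkernel]
  exact (hasSum_integral_mul_fsKernel m hψf).mul_left _

end Kernel

/-- Polynomials in `w` and `conj w`: the exponent `(a, b)` stands for `w ^ a * conj w ^ b`. Symbols,
functions and the products `ψ f`, `g * conj h` entering the integrals all live in this algebra. -/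
abbrev ConjPoly := AddMonoidAlgebra ℂ (ℕ × ℕ)

namespace ConjPoly

open AddMonoidAlgebra

/-- Evaluation at `w`, substituting the complex conjugate of `w` for the second variable. -/
noncomputable def eval (w : ℂ) : ConjPoly →ₐ[ℂ] ℂ :=
  AddMonoidAlgebra.lift ℂ ℂ (ℕ × ℕ)
    { toFun n := w ^ n.toAdd.1 * starRingEnd ℂ w ^ n.toAdd.2
      map_one' := by simp
      map_mul' n k := by
        simp only [toAdd_mul, Prod.fst_add, Prod.snd_add, pow_add]
        ring }

/-- The polynomial whose values are the complex conjugates of those of the given one. -/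
noncomputable def conj : ConjPoly →+* ConjPoly :=
  (mapRingHom (ℕ × ℕ) (starRingEnd ℂ)).comp
    (mapDomainRingHom ℂ (AddEquiv.prodComm (M := ℕ) (N := ℕ)).toAddMonoidHom)

/-- The integral of a polynomial against the weight `|w|^{2m} e^{-|w|²}`, given on monomials. -/
noncomputable def moment (m : ℕ) : ConjPoly →ₗ[ℂ] ℂ :=
  (AddMonoidAlgebra.basis (ℕ × ℕ) ℂ).constr ℂ fun n =>
    if n.1 = n.2 then Real.pi * (n.1 + m).factorial else 0

/-- The projection onto the holomorphic polynomials that is orthogonal for the Fock–Sobolev pairing,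
given on monomials. -/
noncomputable def proj (m : ℕ) : ConjPoly →ₗ[ℂ] ConjPoly :=
  (AddMonoidAlgebra.basis (ℕ × ℕ) ℂ).constr ℂ fun n =>
    if n.2 ≤ n.1 then single (n.1 - n.2, 0) ((n.1 + m).factorial / (n.1 - n.2 + m).factorial : ℂ)
    else 0

@[simp]
lemma eval_single (w : ℂ) (n : ℕ × ℕ) (c : ℂ) :
    eval w (single n c) = c * (w ^ n.1 * starRingEnd ℂ w ^ n.2) := by
  simp [eval]

@[simp]
lemma conj_single (n : ℕ × ℕ) (c : ℂ) :
    conj (single n c) = single n.swap (starRingEnd ℂ c) := by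
  simp [conj]

@[simp]
lemma moment_single (m : ℕ) (n : ℕ × ℕ) (c : ℂ) :
    moment m (single n c) = if n.1 = n.2 then c * (Real.pi * (n.1 + m).factorial) else 0 := by
  have : single n c = c • AddMonoidAlgebra.basis (ℕ × ℕ) ℂ n := by simp
  rw [this, moment, map_smul, Module.Basis.constr_basis]
  simp

@[simp]
lemma proj_single (m : ℕ) (n : ℕ × ℕ) (c : ℂ) :
    proj m (single n c) = if n.2 ≤ n.1 then
      single (n.1 - n.2, 0) (c * ((n.1 + m).factorial / (n.1 - n.2 + m).factorial)) else 0 := by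
  have : single n c = c • AddMonoidAlgebra.basis (ℕ × ℕ) ℂ n := by simp
  rw [this, proj, map_smul, Module.Basis.constr_basis]
  split_ifs <;> simp

lemma eval_conj (w : ℂ) (r : ConjPoly) : eval w (conj r) = starRingEnd ℂ (eval w r) := by
  induction r using AddMonoidAlgebra.induction_linear with
  | zero => simp
  | add r s hr hs => simp only [map_add, hr, hs]
  | single n c =>
    simp only [conj_single, eval_single, Prod.fst_swap, Prod.snd_swap, map_mul, map_pow, conj_conj]
    ring

lemma integrable_eval_mul_fsWt_mul_exp (m : ℕ) (t : ℝ) (r : ConjPoly) :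
    Integrable fun w => eval w r * fsWt m w * Real.exp (t * ‖w‖) := by
  induction r using AddMonoidAlgebra.induction_linear with
  | zero => simp
  | add r s hr hs =>
    simp only [map_add, add_mul]
    exact hr.add hs
  | single n c =>
    have := continuous_fsWt m
    refine ((integrable_norm_pow_mul_exp_mul_exp_neg_sq (n.1 + n.2 + 2 * m) t).const_mul
      ‖c‖).mono' (by simp only [eval_single]; fun_prop) (.of_forall fun w => le_of_eq ?_)
    simp only [eval_single, norm_mul, norm_pow, norm_fsWt, RCLike.norm_conj, norm_real,
      Real.norm_eq_abs, Real.abs_exp]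
    ring

lemma integrable_eval_mul_fsWt (m : ℕ) (r : ConjPoly) :
    Integrable fun w => eval w r * fsWt m w := by
  simpa using integrable_eval_mul_fsWt_mul_exp m 0 r

lemma integral_pow_mul_conj_pow_self_mul_fsWt (m a : ℕ) :
    ∫ w, w ^ a * starRingEnd ℂ w ^ a * fsWt m w = Real.pi * (a + m).factorial := by
  have h (w : ℂ) : w ^ a * starRingEnd ℂ w ^ a * fsWt m w =
      ((‖w‖ ^ (2 * (a + m)) * Real.exp (-‖w‖ ^ 2) : ℝ) : ℂ) := by
    rw [← mul_pow, mul_conj', fsWt]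
    push_cast
    ring
  simp_rw [h]
  rw [integral_complex_ofReal, integral_norm_pow_two_mul_mul_exp_neg_sq]
  push_cast
  rfl

lemma integral_pow_mul_conj_pow_mul_fsWt_of_ne (m : ℕ) {a b : ℕ} (hab : a ≠ b) :
    ∫ w, w ^ a * starRingEnd ℂ w ^ b * fsWt m w = 0 := by
  set F : ℂ → ℂ := fun w => w ^ a * starRingEnd ℂ w ^ b * fsWt m w with hF
  -- rotating by the angle `π / (a - b)` changes the sign of the integrand
  set t : ℝ := Real.pi / ((a : ℝ) - b) with ht
  have hphase : exp (t * I) ^ a * starRingEnd ℂ (exp (t * I)) ^ b = -1 := by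
    have hne : (a : ℂ) - b ≠ 0 := sub_ne_zero.2 (Nat.cast_injective.ne hab)
    rw [← exp_conj, ← exp_nat_mul, ← exp_nat_mul, ← exp_add, ← exp_pi_mul_I]
    simp only [map_mul, conj_ofReal, conj_I, ht]
    push_cast
    congr 1
    field_simp
    ring
  have hrot (w : ℂ) : F (rotation (Circle.exp t) w) = -F w := by
    have hwt : fsWt m (rotation (Circle.exp t) w) = fsWt m w := by
      simp only [fsWt, LinearIsometryEquiv.norm_map]
    simp only [hF, hwt]
    simp only [rotation_apply, Circle.coe_exp, map_mul, mul_pow]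
    linear_combination F w * hphase
  have hinv : ∫ w, F (rotation (Circle.exp t) w) = ∫ w, F w :=
    (rotation (Circle.exp t)).measurePreserving.integral_comp
      (rotation (Circle.exp t)).toHomeomorph.measurableEmbedding F
  simp_rw [hrot, integral_neg] at hinv
  exact self_eq_neg.1 hinv.symm

theorem integral_eval_mul_fsWt (m : ℕ) (r : ConjPoly) :
    ∫ w, eval w r * fsWt m w = moment m r := by
  induction r using AddMonoidAlgebra.induction_linear with
  | zero => simp
  | add r s hr hs =>
    simp only [map_add, add_mul, ← hr, ← hs]
    exact integral_add (integrable_eval_mul_fsWt m r) (integrable_eval_mul_fsWt m s)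
  | single n c =>
    obtain ⟨a, b⟩ := n
    simp only [eval_single, mul_assoc c, moment_single, integral_const_mul]
    split_ifs with hab
    · rw [← hab, integral_pow_mul_conj_pow_self_mul_fsWt]
    · rw [integral_pow_mul_conj_pow_mul_fsWt_of_ne m hab, mul_zero]

theorem fsPair_eval (m : ℕ) (r s : ConjPoly) :
    fsPair m (eval · r) (eval · s) = moment m (r * conj s) := by
  simp only [fsPair, ← integral_eval_mul_fsWt, map_mul, eval_conj]

lemma moment_single_add_single_mul_conj_self (m : ℕ) {a b : ℕ} (hab : a ≠ b) (c d : ℂ) :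
    moment m ((single (a, 0) c + single (b, 0) d) * conj (single (a, 0) c + single (b, 0) d)) =
      ((Real.pi * ((a + m).factorial * ‖c‖ ^ 2 + (b + m).factorial * ‖d‖ ^ 2) : ℝ) : ℂ) := by
  simp only [map_add, conj_single, Prod.swap_prod_mk, add_mul, mul_add, single_mul_single,
    Prod.mk_add_mk, add_zero, zero_add, moment_single, hab, hab.symm, if_true, if_false, mul_conj']
  push_cast
  ring

lemma hasSum_eval_proj (m : ℕ) (z : ℂ) (r : ConjPoly) :
    HasSum
      (fun j : ℕ =>
        moment m (r * conj (single (j, 0) 1)) / (Real.pi * (j + m).factorial) * z ^ j)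
      (eval z (proj m r)) := by
  induction r using AddMonoidAlgebra.induction_linear with
  | zero => simp
  | add r s hr hs => simpa only [map_add, add_mul, add_div] using hr.add hs
  | single n c =>
    obtain ⟨a, b⟩ := n
    have hterm (j : ℕ) : moment m (single (a, b) c * conj (single (j, 0) 1)) =
        if a = b + j then c * (Real.pi * (a + m).factorial) else 0 := by
      simp [single_mul_single]
    simp only [hterm, proj_single]
    split_ifs with hba
    · convert hasSum_single (a - b) fun j hj => ?_ using 1
      · rw [if_pos (by omega), eval_single]
        field_simp
        simp
      · rw [if_neg (by omega), zero_div, zero_mul]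
    · convert hasSum_zero using 2 with j
      · rw [if_neg (by omega), zero_div, zero_mul]
      · exact map_zero _

theorem fsToeplitz_eval (m : ℕ) (q r : ConjPoly) :
    fsToeplitz m (eval · q) (eval · r) = (eval · (proj m (q * r))) := by
  funext z
  have hint := integrable_eval_mul_fsWt_mul_exp m ‖z‖ (q * r)
  simp only [map_mul] at hint
  have hmono (j : ℕ) : (· ^ j : ℂ → ℂ) = (eval · (single (j, 0) 1)) := by
    funext w
    simp
  refine (hasSum_fsToeplitz hint).unique ?_
  simpa only [hmono, ← map_mul, fsPair_eval] using hasSum_eval_proj m z (q * r)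

end ConjPoly

section Example

open AddMonoidAlgebra ConjPoly

/-- The symbol `φ(z) = 2 z³ + 2 z³ conj z + conj z³ + 3 z conj z³`. -/
noncomputable def phi : ConjPoly :=
  single (3, 0) 2 + single (3, 1) 2 + single (0, 3) 1 + single (1, 3) 3

lemma eval_phi (z : ℂ) : eval z phi = 2 * z ^ 3 + 2 * z ^ 3 * starRingEnd ℂ z
    + starRingEnd ℂ z ^ 3 + 3 * z * starRingEnd ℂ z ^ 3 := by
  simp only [phi, map_add, eval_single]
  ring

lemma conj_phi : conj phi =
    single (0, 3) 2 + single (1, 3) 2 + single (3, 0) 1 + single (3, 1) 3 := by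
  simp [phi, map_ofNat]

variable (m : ℕ)

lemma factorial_four_add_div_factorial_three_add :
    ((4 + m).factorial : ℂ) / (3 + m).factorial = m + 4 := by
  rw [div_eq_iff (Nat.cast_ne_zero.2 (3 + m).factorial_ne_zero),
    show 4 + m = 3 + m + 1 by omega, Nat.factorial_succ]
  push_cast
  ring

lemma proj_phi_mul_X : proj m (phi * single (1, 0) 1) =
    single (3, 0) ((2 * (m + 4) : ℝ) : ℂ) + single (4, 0) ((2 : ℝ) : ℂ) := by
  rw [add_comm (single (3, 0) _)]
  simp [phi, add_mul, single_mul_single, factorial_four_add_div_factorial_three_add,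
    Nat.factorial_ne_zero]

lemma proj_conj_phi_mul_X : proj m (conj phi * single (1, 0) 1) =
    single (3, 0) ((3 * (m + 4) : ℝ) : ℂ) + single (4, 0) ((1 : ℝ) : ℂ) := by
  rw [add_comm (single (3, 0) _)]
  simp [conj_phi, add_mul, single_mul_single, factorial_four_add_div_factorial_three_add,
    Nat.factorial_ne_zero]

lemma moment_proj_phi_mul_proj_phi_mul_X :
    moment m (proj m (phi * proj m (phi * single (1, 0) 1)) *
      conj (proj m (phi * single (1, 0) 1))) = 0 := by
  rw [proj_phi_mul_X]
  simp [phi, add_mul, mul_add, single_mul_single]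

lemma moment_proj_conj_phi_mul_proj_phi_mul_X :
    moment m (proj m (conj phi * proj m (phi * single (1, 0) 1)) *
      conj (proj m (conj phi * single (1, 0) 1))) = 0 := by
  rw [proj_phi_mul_X, proj_conj_phi_mul_X]
  simp [conj_phi, add_mul, mul_add, single_mul_single]

lemma moment_proj_phi_mul_X_sub_moment_proj_conj_phi_mul_X :
    moment m (proj m (phi * single (1, 0) 1) * conj (proj m (phi * single (1, 0) 1))) -
        moment m (proj m (conj phi * single (1, 0) 1) *
          conj (proj m (conj phi * single (1, 0) 1))) =
      ((-((5 * m + 17) * (m + 4).factorial) * Real.pi : ℝ) : ℂ) := by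
  have h₃₄ : 3 ≠ 4 := by decide
  rw [proj_phi_mul_X, proj_conj_phi_mul_X, moment_single_add_single_mul_conj_self m h₃₄,
    moment_single_add_single_mul_conj_self m h₃₄]
  simp only [norm_real, Real.norm_eq_abs, sq_abs]
  rw [show 4 + m = 3 + m + 1 by omega, show m + 4 = 3 + m + 1 by omega, Nat.factorial_succ]
  push_cast
  ring

theorem stmt19_general (φ : ℂ → ℂ)
    (hφ : φ = fun z => 2 * z ^ 3 + 2 * z ^ 3 * starRingEnd ℂ z
      + (starRingEnd ℂ z) ^ 3 + 3 * z * (starRingEnd ℂ z) ^ 3) :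
    fsPair m (fsToeplitz m φ (fsToeplitz m φ (fun w => w)))
        (fsToeplitz m φ (fun w => w)) = 0 ∧
    fsPair m (fsToeplitz m (fun w => starRingEnd ℂ (φ w)) (fsToeplitz m φ (fun w => w)))
        (fsToeplitz m (fun w => starRingEnd ℂ (φ w)) (fun w => w)) = 0 ∧
    fsNormSq m (fsToeplitz m φ (fun w => w))
        - fsNormSq m (fsToeplitz m (fun w => starRingEnd ℂ (φ w)) (fun w => w)) =
      ((-((5 * m + 17) * (m + 4).factorial) * Real.pi : ℝ) : ℂ) ∧
    (fsPair m (fsToeplitz m φ (fsToeplitz m φ (fun w => w)))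
        (fsToeplitz m φ (fun w => w)) =
      fsPair m (fsToeplitz m (fun w => starRingEnd ℂ (φ w)) (fsToeplitz m φ (fun w => w)))
        (fsToeplitz m (fun w => starRingEnd ℂ (φ w)) (fun w => w))) ∧
    ¬ (fsNormSq m (fsToeplitz m φ (fun w => w))
        ≥ fsNormSq m (fsToeplitz m (fun w => starRingEnd ℂ (φ w)) (fun w => w))) := by
  have hφ_eval : φ = (eval · phi) := hφ.trans (funext fun z => (eval_phi z).symm)
  have hφ_conj : (fun w => starRingEnd ℂ (φ w)) = (eval · (conj phi)) := by
    simp only [eval_conj, hφ_eval]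
  have hX : (fun w : ℂ => w) = (eval · (single (1, 0) 1)) := by simp
  rw [hφ_conj, hφ_eval, hX]
  simp only [fsNormSq, fsToeplitz_eval, fsPair_eval]
  have hpair := moment_proj_phi_mul_proj_phi_mul_X m
  have hpair_conj := moment_proj_conj_phi_mul_proj_phi_mul_X m
  have hdiff := moment_proj_phi_mul_X_sub_moment_proj_conj_phi_mul_X m
  refine ⟨hpair, hpair_conj, hdiff, hpair.trans hpair_conj.symm, ?_⟩
  rw [ge_iff_le, ← sub_nonneg, hdiff, Complex.zero_le_real, not_le]
  exact mul_neg_of_neg_of_pos (neg_lt_zero.2 (by positivity)) Real.pi_pos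

end Example

theorem stmt19 (φ : ℂ → ℂ)
    (hφ : φ = fun z => 2 * z ^ 3 + 2 * z ^ 3 * starRingEnd ℂ z
      + (starRingEnd ℂ z) ^ 3 + 3 * z * (starRingEnd ℂ z) ^ 3) :
    fsPair 1 (fsToeplitz 1 φ (fsToeplitz 1 φ (fun w => w)))
        (fsToeplitz 1 φ (fun w => w)) = 0 ∧
    fsPair 1 (fsToeplitz 1 (fun w => starRingEnd ℂ (φ w)) (fsToeplitz 1 φ (fun w => w)))
        (fsToeplitz 1 (fun w => starRingEnd ℂ (φ w)) (fun w => w)) = 0 ∧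
    fsNormSq 1 (fsToeplitz 1 φ (fun w => w))
        - fsNormSq 1 (fsToeplitz 1 (fun w => starRingEnd ℂ (φ w)) (fun w => w)) =
      ((-2640 * Real.pi : ℝ) : ℂ) ∧
    (fsPair 1 (fsToeplitz 1 φ (fsToeplitz 1 φ (fun w => w)))
        (fsToeplitz 1 φ (fun w => w)) =
      fsPair 1 (fsToeplitz 1 (fun w => starRingEnd ℂ (φ w)) (fsToeplitz 1 φ (fun w => w)))
        (fsToeplitz 1 (fun w => starRingEnd ℂ (φ w)) (fun w => w))) ∧
    ¬ (fsNormSq 1 (fsToeplitz 1 φ (fun w => w))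
        ≥ fsNormSq 1 (fsToeplitz 1 (fun w => starRingEnd ℂ (φ w)) (fun w => w))) := by
  have hvalue : -((5 * ((1 : ℕ) : ℝ) + 17) * (1 + 4).factorial) * Real.pi = -2640 * Real.pi := by
    norm_num [Nat.factorial]
  exact hvalue ▸ stmt19_general 1 φ hφ
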